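/- Let X₁,…,Xₙ be mutually independent random variables with finitely many values, let Aⁿ=(A₁,…,Aₙ) be a deterministic function of Xⁿ=(X₁,…,Xₙ), let Yⁿ=(Y₁,…,Yₙ) be finite-valued random variables satisfying H(Yⁿ|(Aⁿ,Xⁿ)) = ∑ᵢ H(Yᵢ|(Aᵢ,Xᵢ)), let T be any finite-valued random variable, and let X̂ⁿ=(X̂₁,…,X̂ₙ) be a deterministic function of (T,Yⁿ). Then H(T) ≥ ∑_{i=1}^{n} [ I(Xᵢ;X̂ᵢ) − I((Xᵢ,Aᵢ);Yᵢ) ]. -/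

import Mathlib

open scoped BigOperators

noncomputable section

/-- Probability mass of the event `f = a` under the weight function `q` on a finite space. -/
def pmass {Ω α : Type*} [Fintype Ω] [DecidableEq α] (q : Ω → ℝ) (f : Ω → α) (a : α) : ℝ :=
  ∑ ω, if f ω = a then q ω else 0

/-- Shannon entropy (in bits) of the value of `f` under `q`. -/
def ent {Ω α : Type*} [Fintype Ω] [Fintype α] [DecidableEq α] (q : Ω → ℝ) (f : Ω → α) : ℝ :=
  -∑ a, pmass q f a * Real.logb 2 (pmass q f a)

/-- Conditional Shannon entropy `H(f ∣ g)` (in bits). -/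
def condEnt {Ω α β : Type*} [Fintype Ω] [Fintype α] [DecidableEq α] [Fintype β] [DecidableEq β]
    (q : Ω → ℝ) (f : Ω → α) (g : Ω → β) : ℝ :=
  ent q (fun ω => (f ω, g ω)) - ent q g

/-- Mutual information `I(f ; g)` (in bits). -/
def mutInf {Ω α β : Type*} [Fintype Ω] [Fintype α] [DecidableEq α] [Fintype β] [DecidableEq β]
    (q : Ω → ℝ) (f : Ω → α) (g : Ω → β) : ℝ :=
  ent q f + ent q g - ent q (fun ω => (f ω, g ω))

/-- Conditional mutual information `I(f ; g ∣ h)` (in bits). -/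
def condMutInf {Ω α β γ : Type*} [Fintype Ω] [Fintype α] [DecidableEq α] [Fintype β]
    [DecidableEq β] [Fintype γ] [DecidableEq γ]
    (q : Ω → ℝ) (f : Ω → α) (g : Ω → β) (h : Ω → γ) : ℝ :=
  condEnt q f h - condEnt q f (fun ω => (g ω, h ω))

/-- `q` is a probability mass function on `Ω`. -/
def IsPMF {Ω : Type*} [Fintype Ω] (q : Ω → ℝ) : Prop :=
  (∀ ω, 0 ≤ q ω) ∧ ∑ ω, q ω = 1

/-! Every reproduction `X̂ᵢ` is a function of `(T, Yⁿ)`, so data processing and the independence of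
the `Xᵢ` give `∑ᵢ I(Xᵢ;X̂ᵢ) ≤ I(Xⁿ;(T,Yⁿ))`. Revealing `T` adds at most `H(T)` to `I(Xⁿ;Yⁿ)`, and
`I(Xⁿ;Yⁿ) ≤ I((Aⁿ,Xⁿ);Yⁿ)`, which single-letterizes over the memoryless side-information channel.
The only analytic input is Gibbs' inequality, in the form `I(f;g∣h) ≥ 0`. -/

section Pmass

variable {Ω α β : Type*} [Fintype Ω] [DecidableEq α] [DecidableEq β] {q : Ω → ℝ}

theorem sum_pmass_mul [Fintype α] (q : Ω → ℝ) (f : Ω → α) (F : α → ℝ) :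
    ∑ a, pmass q f a * F a = ∑ ω, q ω * F (f ω) := by
  simp_rw [pmass, Finset.sum_mul]
  rw [Finset.sum_comm]
  simp [ite_mul]

theorem sum_pmass [Fintype α] (q : Ω → ℝ) (f : Ω → α) : ∑ a, pmass q f a = ∑ ω, q ω := by
  simpa using sum_pmass_mul q f fun _ => 1

theorem sum_pmass_prodMk_left [Fintype α] (q : Ω → ℝ) (f : Ω → α) (g : Ω → β) (b : β) :
    ∑ a, pmass q (fun ω => (f ω, g ω)) (a, b) = pmass q g b := by
  simp_rw [pmass, Prod.mk.injEq, ite_and]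
  rw [Finset.sum_comm]
  simp

theorem pmass_nonneg (hq : ∀ ω, 0 ≤ q ω) (f : Ω → α) (a : α) : 0 ≤ pmass q f a :=
  Finset.sum_nonneg fun ω _ => ite_nonneg (hq ω) le_rfl

theorem le_pmass_apply (hq : ∀ ω, 0 ≤ q ω) (f : Ω → α) (ω : Ω) : q ω ≤ pmass q f (f ω) := by
  have h := Finset.single_le_sum (f := fun ω' => if f ω' = f ω then q ω' else 0)
    (fun ω' _ => ite_nonneg (hq ω') le_rfl) (Finset.mem_univ ω)
  simpa only [pmass, if_true] using h

theorem pmass_apply_pos (hq : ∀ ω, 0 ≤ q ω) (f : Ω → α) {ω : Ω} (hω : 0 < q ω) :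
    0 < pmass q f (f ω) :=
  hω.trans_le (le_pmass_apply hq f ω)

theorem pmass_le_pmass_comp (hq : ∀ ω, 0 ≤ q ω) (f : Ω → α) (e : α → β) (a : α) :
    pmass q f a ≤ pmass q (fun ω => e (f ω)) (e a) := by
  refine Finset.sum_le_sum fun ω _ => ?_
  by_cases h : f ω = a
  · simp only [h, if_true, le_rfl]
  · simpa only [h, if_false] using ite_nonneg (hq ω) le_rfl

theorem pmass_comp_of_injective (q : Ω → ℝ) (f : Ω → α) {e : α → β}
    (he : Function.Injective e) (a : α) : pmass q (fun ω => e (f ω)) (e a) = pmass q f a := by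
  simp only [pmass, he.eq_iff]

end Pmass

section Ent

variable {Ω α β : Type*} [Fintype Ω] [Fintype α] [DecidableEq α] [Fintype β] [DecidableEq β]
  {q : Ω → ℝ}

theorem ent_eq_neg_sum (q : Ω → ℝ) (f : Ω → α) :
    ent q f = -∑ ω, q ω * Real.logb 2 (pmass q f (f ω)) := by
  rw [ent, sum_pmass_mul q f fun a => Real.logb 2 (pmass q f a)]

theorem ent_comp_of_injective (q : Ω → ℝ) (f : Ω → α) {e : α → β} (he : Function.Injective e) :
    ent q (fun ω => e (f ω)) = ent q f := by
  simp only [ent_eq_neg_sum, pmass_comp_of_injective q f he]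

theorem ent_comp_le (hq : ∀ ω, 0 ≤ q ω) (f : Ω → α) (e : α → β) :
    ent q (fun ω => e (f ω)) ≤ ent q f := by
  rw [ent_eq_neg_sum, ent_eq_neg_sum, neg_le_neg_iff]
  refine Finset.sum_le_sum fun ω _ => ?_
  rcases (hq ω).eq_or_lt with h | h
  · simp only [← h, zero_mul, le_rfl]
  · exact mul_le_mul_of_nonneg_left (Real.logb_le_logb_of_le one_lt_two
      (pmass_apply_pos hq f h) (pmass_le_pmass_comp hq f e _)) h.le

theorem ent_const {b : β} (hq : ∑ ω, q ω = 1) : ent q (fun _ => b) = 0 := by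
  simp [ent_eq_neg_sum, pmass, hq]

theorem ent_prodMk_comm (q : Ω → ℝ) (f : Ω → α) (g : Ω → β) :
    ent q (fun ω => (f ω, g ω)) = ent q (fun ω => (g ω, f ω)) :=
  ent_comp_of_injective q (fun ω => (g ω, f ω)) Prod.swap_injective

theorem ent_pi_eq_sum_of_indep {ι : Type*} [Fintype ι] [DecidableEq ι] {𝒳 : ι → Type*}
    [∀ i, Fintype (𝒳 i)] [∀ i, DecidableEq (𝒳 i)] (hq : ∀ ω, 0 ≤ q ω) (X : ∀ i, Ω → 𝒳 i)
    (hindep : ∀ xs : ∀ i, 𝒳 i, pmass q (fun ω i => X i ω) xs = ∏ i, pmass q (X i) (xs i)) :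
    ent q (fun ω i => X i ω) = ∑ i, ent q (X i) := by
  simp only [ent_eq_neg_sum]
  rw [Finset.sum_neg_distrib, Finset.sum_comm]
  refine congrArg Neg.neg (Finset.sum_congr rfl fun ω _ => ?_)
  rw [← Finset.mul_sum]
  rcases (hq ω).eq_or_lt with h | h
  · simp only [← h, zero_mul]
  · rw [hindep, Real.logb_prod _ _ fun i _ => (pmass_apply_pos hq (X i) h).ne']

end Ent

section Gibbs

theorem mul_log_sub_mul_log_le_sub {x y : ℝ} (hx : 0 ≤ x) (hy : 0 ≤ y) (hxy : y = 0 → x = 0) :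
    x * Real.log y - x * Real.log x ≤ y - x := by
  rcases hx.eq_or_lt with rfl | hx
  · simpa using hy
  have hy : 0 < y := hy.lt_of_ne' (mt hxy hx.ne')
  calc x * Real.log y - x * Real.log x
      = x * Real.log (y / x) := by rw [Real.log_div hy.ne' hx.ne', mul_sub]
    _ ≤ x * (y / x - 1) :=
        mul_le_mul_of_nonneg_left (Real.log_le_sub_one_of_pos (div_pos hy hx)) hx.le
    _ = y - x := by rw [mul_sub, mul_div_cancel₀ y hx.ne', mul_one]

theorem sum_mul_logb_le_sum_mul_logb {ι : Type*} {s : Finset ι} {p r : ι → ℝ} {b : ℝ}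
    (hb : 1 < b) (hp : ∀ i ∈ s, 0 ≤ p i) (hr : ∀ i ∈ s, 0 ≤ r i)
    (hpr : ∀ i ∈ s, r i = 0 → p i = 0) (hsum : ∑ i ∈ s, r i ≤ ∑ i ∈ s, p i) :
    ∑ i ∈ s, p i * Real.logb b (r i) ≤ ∑ i ∈ s, p i * Real.logb b (p i) := by
  simp only [Real.logb, ← mul_div_assoc, ← Finset.sum_div]
  refine div_le_div_of_nonneg_right ?_ (Real.log_pos hb).le
  have h := Finset.sum_le_sum fun i hi =>
    mul_log_sub_mul_log_le_sub (hp i hi) (hr i hi) (hpr i hi)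
  rw [Finset.sum_sub_distrib, Finset.sum_sub_distrib] at h
  linarith

end Gibbs

section CondIndepMass

variable {Ω α β γ : Type*} [Fintype Ω] [DecidableEq α] [DecidableEq β] [DecidableEq γ] {q : Ω → ℝ}

/-- The mass function `p(a, c) p(b, c) / p(c)`: it has the same `(f, h)`- and `(g, h)`-marginals
as the joint law of `(f, g, h)`, but makes `f` and `g` conditionally independent given `h`. It is
the reference law against which Gibbs' inequality is applied to bound `I(f ; g ∣ h)`. Where
`p(c) = 0`, the convention `x / 0 = 0` gives the correct value `0`. -/
def condIndepMass (q : Ω → ℝ) (f : Ω → α) (g : Ω → β) (h : Ω → γ) (x : α × β × γ) : ℝ :=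
  pmass q (fun ω => (f ω, h ω)) (x.1, x.2.2) * pmass q (fun ω => (g ω, h ω)) x.2 / pmass q h x.2.2

theorem condIndepMass_nonneg (hq : ∀ ω, 0 ≤ q ω) (f : Ω → α) (g : Ω → β) (h : Ω → γ)
    (x : α × β × γ) : 0 ≤ condIndepMass q f g h x :=
  div_nonneg (mul_nonneg (pmass_nonneg hq _ _) (pmass_nonneg hq _ _)) (pmass_nonneg hq _ _)

theorem pmass_eq_zero_of_condIndepMass_eq_zero (hq : ∀ ω, 0 ≤ q ω) (f : Ω → α) (g : Ω → β)
    (h : Ω → γ) {x : α × β × γ} (hx : condIndepMass q f g h x = 0) :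
    pmass q (fun ω => (f ω, g ω, h ω)) x = 0 := by
  have hfh := pmass_le_pmass_comp hq (fun ω => (f ω, g ω, h ω)) (fun y => (y.1, y.2.2)) x
  have hgh := pmass_le_pmass_comp hq (fun ω => (f ω, g ω, h ω)) (fun y => y.2) x
  have hh := pmass_le_pmass_comp hq (fun ω => (f ω, g ω, h ω)) (fun y => y.2.2) x
  refine le_antisymm ?_ (pmass_nonneg hq _ x)
  rcases div_eq_zero_iff.1 hx with hmul | h0
  · rcases mul_eq_zero.1 hmul with h0 | h0
    · exact hfh.trans_eq h0
    · exact hgh.trans_eq h0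
  · exact hh.trans_eq h0

variable [Fintype α] [Fintype β] [Fintype γ]

theorem sum_condIndepMass (q : Ω → ℝ) (f : Ω → α) (g : Ω → β) (h : Ω → γ) :
    ∑ x, condIndepMass q f g h x = ∑ ω, q ω := by
  calc ∑ x, condIndepMass q f g h x
      = ∑ c, ∑ b, ∑ a, condIndepMass q f g h (a, b, c) := by
        rw [Fintype.sum_prod_type_right, Fintype.sum_prod_type_right]
    _ = ∑ c, pmass q h c * pmass q h c / pmass q h c := by
        simp only [condIndepMass, ← Finset.sum_div, ← Finset.sum_mul, ← Finset.mul_sum,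
          sum_pmass_prodMk_left]
    _ = ∑ ω, q ω := by simp only [mul_self_div_self, sum_pmass]

theorem sum_pmass_mul_logb_condIndepMass (hq : ∀ ω, 0 ≤ q ω) (f : Ω → α) (g : Ω → β)
    (h : Ω → γ) :
    ∑ x, pmass q (fun ω => (f ω, g ω, h ω)) x * Real.logb 2 (condIndepMass q f g h x) =
      ent q h - ent q (fun ω => (f ω, h ω)) - ent q (fun ω => (g ω, h ω)) := by
  have logb_apply (ω : Ω) : q ω * Real.logb 2 (condIndepMass q f g h (f ω, g ω, h ω)) =
      q ω * Real.logb 2 (pmass q (fun ω => (f ω, h ω)) (f ω, h ω)) +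
        q ω * Real.logb 2 (pmass q (fun ω => (g ω, h ω)) (g ω, h ω)) -
          q ω * Real.logb 2 (pmass q h (h ω)) := by
    rcases (hq ω).eq_or_lt with hω | hω
    · simp only [← hω, zero_mul, add_zero, sub_zero]
    · have hfh := (pmass_apply_pos hq (fun ω => (f ω, h ω)) hω).ne'
      have hgh := (pmass_apply_pos hq (fun ω => (g ω, h ω)) hω).ne'
      have hh := (pmass_apply_pos hq h hω).ne'
      rw [condIndepMass, Real.logb_div (mul_ne_zero hfh hgh) hh, Real.logb_mul hfh hgh, mul_sub,
        mul_add]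
  rw [sum_pmass_mul q (fun ω => (f ω, g ω, h ω)) fun x => Real.logb 2 (condIndepMass q f g h x)]
  simp only [logb_apply, Finset.sum_sub_distrib, Finset.sum_add_distrib, ent_eq_neg_sum]
  ring

end CondIndepMass

section CondEnt

variable {Ω α β γ : Type*} [Fintype Ω] [Fintype α] [DecidableEq α] [Fintype β] [DecidableEq β]
  [Fintype γ] [DecidableEq γ] {q : Ω → ℝ}

theorem condMutInf_nonneg (hq : ∀ ω, 0 ≤ q ω) (f : Ω → α) (g : Ω → β) (h : Ω → γ) :
    0 ≤ condMutInf q f g h := by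
  have gibbs := sum_mul_logb_le_sum_mul_logb (s := Finset.univ) one_lt_two
    (fun x _ => pmass_nonneg hq (fun ω => (f ω, g ω, h ω)) x)
    (fun x _ => condIndepMass_nonneg hq f g h x)
    (fun x _ => pmass_eq_zero_of_condIndepMass_eq_zero hq f g h)
    ((sum_condIndepMass q f g h).trans (sum_pmass q _).symm).le
  rw [sum_pmass_mul_logb_condIndepMass hq] at gibbs
  rw [condMutInf, condEnt, condEnt, ent.eq_def q fun ω => (f ω, g ω, h ω)]
  linarith

theorem condEnt_prodMk_right_le (hq : ∀ ω, 0 ≤ q ω) (f : Ω → α) (g : Ω → β) (h : Ω → γ) :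
    condEnt q f (fun ω => (g ω, h ω)) ≤ condEnt q f h :=
  sub_nonneg.1 (condMutInf_nonneg hq f g h)

theorem condEnt_comp_left_of_injective (q : Ω → ℝ) (f : Ω → α) (g : Ω → γ) {e : α → β}
    (he : Function.Injective e) : condEnt q (fun ω => e (f ω)) g = condEnt q f g :=
  congrArg (· - ent q g)
    (ent_comp_of_injective q (fun ω => (f ω, g ω)) (he.prodMap Function.injective_id))

theorem condEnt_comp_right_of_injective (q : Ω → ℝ) (f : Ω → α) (g : Ω → β) {e : β → γ}
    (he : Function.Injective e) : condEnt q f (fun ω => e (g ω)) = condEnt q f g :=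
  congrArg₂ (· - ·)
    (ent_comp_of_injective q (fun ω => (f ω, g ω)) (Function.injective_id.prodMap he))
    (ent_comp_of_injective q g he)

theorem condEnt_le_condEnt_comp (hq : ∀ ω, 0 ≤ q ω) (f : Ω → α) (g : Ω → β) (e : β → γ) :
    condEnt q f g ≤ condEnt q f (fun ω => e (g ω)) :=
  calc condEnt q f g = condEnt q f (fun ω => (g ω, e (g ω))) :=
        (condEnt_comp_right_of_injective q f g (e := fun b => (b, e b))
          fun _ _ h => congrArg Prod.fst h).symm
    _ ≤ condEnt q f (fun ω => e (g ω)) := condEnt_prodMk_right_le hq f g _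

theorem condEnt_const {c : γ} (hq : ∑ ω, q ω = 1) (f : Ω → α) :
    condEnt q f (fun _ => c) = ent q f := by
  rw [condEnt, ent_const hq, sub_zero]
  exact ent_comp_of_injective q f (Prod.mk_left_injective c)

theorem condEnt_le_ent (hq : IsPMF q) (f : Ω → α) (g : Ω → β) : condEnt q f g ≤ ent q f :=
  (condEnt_le_condEnt_comp hq.1 f g fun _ => ()).trans_eq (condEnt_const hq.2 f)

theorem condEnt_of_subsingleton [Subsingleton α] (q : Ω → ℝ) (f : Ω → α) (g : Ω → β) :
    condEnt q f g = 0 :=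
  sub_eq_zero.2 (ent_comp_of_injective q (fun ω => (f ω, g ω)) Prod.snd_injective).symm

theorem condEnt_prodMk_left (q : Ω → ℝ) (f : Ω → α) (g : Ω → β) (h : Ω → γ) :
    condEnt q (fun ω => (f ω, g ω)) h =
      condEnt q f (fun ω => (g ω, h ω)) + condEnt q g h := by
  have assoc : ent q (fun ω => ((f ω, g ω), h ω)) = ent q (fun ω => (f ω, g ω, h ω)) :=
    ent_comp_of_injective q (fun ω => (f ω, g ω, h ω)) (e := fun x => ((x.1, x.2.1), x.2.2))
      (Equiv.prodAssoc α β γ).symm.injective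
  simp only [condEnt, assoc, sub_add_sub_cancel]

theorem condEnt_prodMk_left_le_add (hq : ∀ ω, 0 ≤ q ω) (f : Ω → α) (g : Ω → β) (h : Ω → γ) :
    condEnt q (fun ω => (f ω, g ω)) h ≤ condEnt q f h + condEnt q g h :=
  (condEnt_prodMk_left q f g h).trans_le
    (add_le_add_left (condEnt_prodMk_right_le hq f g h) _)

end CondEnt

section Pi

variable {Ω β ι : Type*} {𝒴 : ι → Type*} [Fintype Ω] [Fintype β] [DecidableEq β] [DecidableEq ι]
  [∀ i, Fintype (𝒴 i)] [∀ i, DecidableEq (𝒴 i)] {q : Ω → ℝ}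

theorem condEnt_restrict_le_sum (hq : ∀ ω, 0 ≤ q ω) (Y : ∀ i, Ω → 𝒴 i) (g : Ω → β)
    (s : Finset ι) :
    condEnt q (fun ω (i : s) => Y i ω) g ≤ ∑ i ∈ s, condEnt q (Y i) g := by
  induction s using Finset.induction_on with
  | empty => exact (condEnt_of_subsingleton q _ g).le
  | insert a s ha ih =>
    let peel (y : ∀ i : ↥(insert a s), 𝒴 i) : 𝒴 a × ∀ i : s, 𝒴 i :=
      (y ⟨a, Finset.mem_insert_self a s⟩, fun i => y ⟨i, Finset.mem_insert_of_mem i.2⟩)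
    have peel_injective : Function.Injective peel := by
      rintro y y' h
      obtain ⟨h_a, h_s⟩ := Prod.mk.inj h
      funext ⟨i, hi⟩
      rcases Finset.mem_insert.1 hi with rfl | hi
      · exact h_a
      · exact congrFun h_s ⟨i, hi⟩
    calc condEnt q (fun ω (i : ↥(insert a s)) => Y i ω) g
        = condEnt q (fun ω => (Y a ω, fun i : s => Y i ω)) g :=
          (condEnt_comp_left_of_injective q _ g peel_injective).symm
      _ ≤ condEnt q (Y a) g + condEnt q (fun ω (i : s) => Y i ω) g :=
          condEnt_prodMk_left_le_add hq (Y a) _ g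
      _ ≤ condEnt q (Y a) g + ∑ i ∈ s, condEnt q (Y i) g := by gcongr
      _ = ∑ i ∈ insert a s, condEnt q (Y i) g := by rw [Finset.sum_insert ha]

variable [Fintype ι]

theorem condEnt_pi_le_sum (hq : ∀ ω, 0 ≤ q ω) (Y : ∀ i, Ω → 𝒴 i) (g : Ω → β) :
    condEnt q (fun ω i => Y i ω) g ≤ ∑ i, condEnt q (Y i) g := by
  have restrict_injective : Function.Injective
      fun (y : ∀ i, 𝒴 i) (i : ↥(Finset.univ : Finset ι)) => y i :=
    fun _ _ h => funext fun i => congrFun h ⟨i, Finset.mem_univ i⟩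
  exact (condEnt_comp_left_of_injective q (fun ω i => Y i ω) g restrict_injective).symm.trans_le
    (condEnt_restrict_le_sum hq Y g Finset.univ)

theorem ent_pi_le_sum (hq : IsPMF q) (Y : ∀ i, Ω → 𝒴 i) :
    ent q (fun ω i => Y i ω) ≤ ∑ i, ent q (Y i) := by
  simpa only [condEnt_const hq.2] using condEnt_pi_le_sum hq.1 Y fun _ => ()

end Pi

section MutInf

variable {Ω α β γ : Type*} [Fintype Ω] [Fintype α] [DecidableEq α] [Fintype β] [DecidableEq β]
  [Fintype γ] [DecidableEq γ] {q : Ω → ℝ}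

theorem mutInf_eq_ent_sub_condEnt (q : Ω → ℝ) (f : Ω → α) (g : Ω → β) :
    mutInf q f g = ent q f - condEnt q f g := by
  rw [mutInf, condEnt, sub_sub_eq_add_sub]

theorem mutInf_comm (q : Ω → ℝ) (f : Ω → α) (g : Ω → β) : mutInf q f g = mutInf q g f := by
  rw [mutInf, mutInf, ent_prodMk_comm, add_comm]

theorem mutInf_comp_right_le (hq : ∀ ω, 0 ≤ q ω) (f : Ω → α) (g : Ω → β) (e : β → γ) :
    mutInf q f (fun ω => e (g ω)) ≤ mutInf q f g := by
  simp only [mutInf_eq_ent_sub_condEnt]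
  exact sub_le_sub_left (condEnt_le_condEnt_comp hq f g e) _

theorem mutInf_comp_left_le (hq : ∀ ω, 0 ≤ q ω) (f : Ω → α) (g : Ω → β) (e : α → γ) :
    mutInf q (fun ω => e (f ω)) g ≤ mutInf q f g := by
  rw [mutInf_comm q _ g, mutInf_comm q f g]
  exact mutInf_comp_right_le hq g f e

theorem mutInf_prodMk_right_le_ent_add (hq : IsPMF q) (f : Ω → α) (g : Ω → β) (h : Ω → γ) :
    mutInf q f (fun ω => (g ω, h ω)) ≤ ent q g + mutInf q f h := by
  have hgh : ent q (fun ω => (g ω, h ω)) - ent q h ≤ ent q g := condEnt_le_ent hq g h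
  have hfh : ent q (fun ω => (f ω, h ω)) ≤ ent q (fun ω => (f ω, g ω, h ω)) :=
    ent_comp_le hq.1 (fun ω => (f ω, g ω, h ω)) fun x => (x.1, x.2.2)
  simp only [mutInf]
  linarith

variable {ι : Type*} [Fintype ι] [DecidableEq ι]

theorem sum_mutInf_le_mutInf_pi_of_indep {𝒳 : ι → Type*} [∀ i, Fintype (𝒳 i)]
    [∀ i, DecidableEq (𝒳 i)] (hq : ∀ ω, 0 ≤ q ω) (X : ∀ i, Ω → 𝒳 i) (g : Ω → β)
    (hindep : ∀ xs : ∀ i, 𝒳 i, pmass q (fun ω i => X i ω) xs = ∏ i, pmass q (X i) (xs i)) :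
    ∑ i, mutInf q (X i) g ≤ mutInf q (fun ω i => X i ω) g := by
  simp only [mutInf_eq_ent_sub_condEnt, Finset.sum_sub_distrib,
    ent_pi_eq_sum_of_indep hq X hindep]
  exact sub_le_sub_left (condEnt_pi_le_sum hq X g) _

theorem mutInf_pi_le_sum_of_memoryless {𝒵 𝒴 : ι → Type*} [∀ i, Fintype (𝒵 i)]
    [∀ i, DecidableEq (𝒵 i)] [∀ i, Fintype (𝒴 i)] [∀ i, DecidableEq (𝒴 i)] (hq : IsPMF q)
    (f : Ω → α) (Z : ∀ i, Ω → 𝒵 i) (Y : ∀ i, Ω → 𝒴 i)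
    (hY : condEnt q (fun ω i => Y i ω) f = ∑ i, condEnt q (Y i) (Z i)) :
    mutInf q f (fun ω i => Y i ω) ≤ ∑ i, mutInf q (Z i) (Y i) := by
  simp only [mutInf_comm q f, mutInf_comm q (Z _), mutInf_eq_ent_sub_condEnt,
    Finset.sum_sub_distrib, hY]
  exact sub_le_sub_right (ent_pi_le_sum hq Y) _

end MutInf

theorem converse_chain_encoder_actions_general {Ω ι 𝒯 : Type*} {𝒳 𝒜 𝒴 Xh : ι → Type*}
    [Fintype Ω] [Fintype ι] [DecidableEq ι] [Fintype 𝒯] [DecidableEq 𝒯]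
    [∀ i, Fintype (𝒳 i)] [∀ i, DecidableEq (𝒳 i)] [∀ i, Fintype (𝒜 i)] [∀ i, DecidableEq (𝒜 i)]
    [∀ i, Fintype (𝒴 i)] [∀ i, DecidableEq (𝒴 i)] [∀ i, Fintype (Xh i)] [∀ i, DecidableEq (Xh i)]
    (p : Ω → ℝ) (hp : IsPMF p) (X : ∀ i, Ω → 𝒳 i) (A : ∀ i, Ω → 𝒜 i) (Y : ∀ i, Ω → 𝒴 i)
    (Xhat : ∀ i, Ω → Xh i) (T : Ω → 𝒯)
    (hindep : ∀ xs : ∀ i, 𝒳 i, pmass p (fun ω i => X i ω) xs = ∏ i, pmass p (X i) (xs i))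
    (hY : condEnt p (fun ω i => Y i ω) (fun ω => (fun i => A i ω, fun i => X i ω)) =
      ∑ i, condEnt p (Y i) (fun ω => (A i ω, X i ω)))
    (hXhat : ∃ g : 𝒯 → (∀ i, 𝒴 i) → ∀ i, Xh i, ∀ ω i, Xhat i ω = g (T ω) (fun j => Y j ω) i) :
    ent p T ≥ ∑ i, (mutInf p (X i) (Xhat i) - mutInf p (fun ω => (X i ω, A i ω)) (Y i)) := by
  obtain ⟨g, hg⟩ := hXhat
  obtain rfl : Xhat = fun i ω => g (T ω) (fun j => Y j ω) i := funext₂ fun i ω => hg ω i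
  rw [Finset.sum_sub_distrib, ge_iff_le, sub_le_iff_le_add]
  calc ∑ i, mutInf p (X i) (fun ω => g (T ω) (fun j => Y j ω) i)
      ≤ ∑ i, mutInf p (X i) (fun ω => (T ω, fun j => Y j ω)) :=
        Finset.sum_le_sum fun i _ => mutInf_comp_right_le hp.1 (X i)
          (fun ω => (T ω, fun j => Y j ω)) (fun ty => g ty.1 ty.2 i)
    _ ≤ mutInf p (fun ω i => X i ω) (fun ω => (T ω, fun j => Y j ω)) :=
        sum_mutInf_le_mutInf_pi_of_indep hp.1 X _ hindep
    _ ≤ ent p T + mutInf p (fun ω i => X i ω) (fun ω j => Y j ω) :=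
        mutInf_prodMk_right_le_ent_add hp _ T _
    _ ≤ ent p T + mutInf p (fun ω => (fun i => A i ω, fun i => X i ω)) (fun ω j => Y j ω) :=
        add_le_add_right (mutInf_comp_left_le hp.1
          (fun ω => (fun i => A i ω, fun i => X i ω)) _ Prod.snd) _
    _ ≤ ent p T + ∑ i, mutInf p (fun ω => (A i ω, X i ω)) (Y i) :=
        add_le_add_right (mutInf_pi_le_sum_of_memoryless hp _ _ Y hY) _
    _ ≤ ent p T + ∑ i, mutInf p (fun ω => (X i ω, A i ω)) (Y i) :=
        add_le_add_right (Finset.sum_le_sum fun i _ =>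
          mutInf_comp_left_le hp.1 (fun ω => (X i ω, A i ω)) (Y i) Prod.swap) _

/-- Let `X₁,…,Xₙ` be mutually independent, `Aⁿ` a deterministic function of
`Xⁿ`, suppose `H(Yⁿ|(Aⁿ,Xⁿ)) = ∑ᵢ H(Yᵢ|(Aᵢ,Xᵢ))` (memoryless side-information channel),
let `T` be any finite-valued random variable, and let `X̂ⁿ` be a deterministic function of
`(T, Yⁿ)`. Then `H(T) ≥ ∑ᵢ [ I(Xᵢ;X̂ᵢ) − I((Xᵢ,Aᵢ);Yᵢ) ]`. -/
theorem converse_chain_encoder_actions {Ω 𝒳 𝒜 𝒴 Xh 𝒯 : Type*} [Fintype Ω]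
    [Fintype 𝒳] [DecidableEq 𝒳] [Fintype 𝒜] [DecidableEq 𝒜]
    [Fintype 𝒴] [DecidableEq 𝒴] [Fintype Xh] [DecidableEq Xh] [Fintype 𝒯] [DecidableEq 𝒯]
    (p : Ω → ℝ) (hp : IsPMF p) {n : ℕ}
    (X : Fin n → Ω → 𝒳) (A : Fin n → Ω → 𝒜) (Y : Fin n → Ω → 𝒴)
    (Xhat : Fin n → Ω → Xh) (T : Ω → 𝒯)
    (hindep : ∀ xs : Fin n → 𝒳,
      pmass p (fun ω => (fun i => X i ω)) xs = ∏ i, pmass p (X i) (xs i))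
    (hA : ∃ ψ : (Fin n → 𝒳) → Fin n → 𝒜, ∀ ω i, A i ω = ψ (fun j => X j ω) i)
    (hY : condEnt p (fun ω => (fun i => Y i ω))
        (fun ω => ((fun i => A i ω), (fun i => X i ω))) =
      ∑ i, condEnt p (Y i) (fun ω => (A i ω, X i ω)))
    (hXhat : ∃ g : 𝒯 → (Fin n → 𝒴) → Fin n → Xh,
      ∀ ω i, Xhat i ω = g (T ω) (fun j => Y j ω) i) :
    ent p T ≥ ∑ i, (mutInf p (X i) (Xhat i) -
      mutInf p (fun ω => (X i ω, A i ω)) (Y i)) :=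
  converse_chain_encoder_actions_general p hp X A Y Xhat T hindep hY hXhat
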